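/- Let w be a word of length n over a totally ordered alphabet with letters partitioned into 'even' and 'odd' types, and let λ = φ(w) be the shape produced by the generalized RSK algorithm (even letters form weakly increasing rows, odd letters allow strict decrease within columns). Then for every k ≥ 1, the sum of the first k row lengths of λ equals r_k(w), the maximal total size of a union of k disjoint increasing subsequences of w, and the sum of the first k column lengths equals c_k(w), the maximal total size of a union of k disjoint decreasing subsequences. -/

import Mathlib

variable {α : Type*} [LinearOrder α]

/-- Generalized row bumping: the incoming letter `x` bumps the leftmost entry strictly
greater than `x` if `x` is even (`parity x = true`), or the leftmost entry `≥ x` if `x`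
is odd; if no entry can be bumped, `x` is appended to the end of the row. Returns the new
row together with the bumped letter, if any. -/
def bumpRow (parity : α → Bool) (x : α) : List α → List α × Option α
  | [] => ([x], none)
  | y :: ys =>
    if (if parity x then x < y else x ≤ y) then (x :: ys, some y)
    else
      let p := bumpRow parity x ys
      (y :: p.1, p.2)

/-- Insertion of a letter into a tableau (a list of rows) by generalized row bumping. -/
def insertTab (parity : α → Bool) : α → List (List α) → List (List α)
  | x, [] => [[x]]
  | x, r :: rs =>
    let p := bumpRow parity x r
    match p.2 with
    | none => p.1 :: rs
    | some y => p.1 :: insertTab parity y rs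

/-- The tableau produced by the generalized RSK algorithm applied to the word `w`. -/
def rskTab (parity : α → Bool) (w : List α) : List (List α) :=
  w.foldl (fun T x => insertTab parity x T) ([] : List (List α))

/-- Two complementary transitive relations. -/
structure ComplTrans {β : Type*} (I D : β → β → Prop) : Prop where
  trans_left : ∀ {a b c}, I a b → I b c → I a c
  trans_right : ∀ {a b c}, D a b → D b c → D a c
  right_iff : ∀ a b, D a b ↔ ¬ I a b

namespace ComplTrans

variable {β : Type*} {I D : β → β → Prop}

theorem left_iff (h : ComplTrans I D) (a b : β) : I a b ↔ ¬ D a b := by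
  rw [h.right_iff, not_not]

protected theorem symm (h : ComplTrans I D) : ComplTrans D I :=
  ⟨h.trans_right, h.trans_left, h.left_iff⟩

protected theorem flip (h : ComplTrans I D) : ComplTrans (flip I) (flip D) :=
  ⟨fun h₁ h₂ => h.trans_left h₂ h₁, fun h₁ h₂ => h.trans_right h₂ h₁,
    fun a b => h.right_iff b a⟩

/-- If `a, c` are `I`-related but `a, b` are not, then `b, c` are `I`-related. -/
theorem left_of_left_of_right (h : ComplTrans I D) {a b c : β} (hac : I a c) (hab : D a b) :
    I b c := by
  rw [h.left_iff]
  exact fun hbc => (h.right_iff a c).1 (h.trans_right hab hbc) hac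

/-- If `a, c` are `I`-related but `b, c` are not, then `a, b` are `I`-related. -/
theorem left_of_right_of_left (h : ComplTrans I D) {a b c : β} (hac : I a c) (hbc : D b c) :
    I a b := by
  rw [h.left_iff]
  exact fun hab => (h.right_iff a c).1 (h.trans_right hab hbc) hac

end ComplTrans

/-- Two entries of a coloured word which share a colour are `I`-related. -/
def ColorRel {β : Type*} (I : β → β → Prop) {k : ℕ} (p q : β × Option (Fin k)) : Prop :=
  ∀ t, p.2 = some t → q.2 = some t → I p.1 q.1

/-- The word `w` has `k` disjoint subsequences, each a chain for `I`, of total size `m`. They are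
encoded by a partial colouring of the word by `k` colours. -/
def HasChains {β : Type*} (I : β → β → Prop) (w : List β) (k m : ℕ) : Prop :=
  ∃ c : List (β × Option (Fin k)), c.map Prod.fst = w ∧ c.Pairwise (ColorRel I) ∧
    c.countP (fun p => p.2.isSome) = m

section Chains

variable {β : Type*} {I D : β → β → Prop}

theorem HasChains.reverse {w : List β} {k m : ℕ} (h : HasChains I w k m) :
    HasChains (flip I) w.reverse k m := by
  obtain ⟨c, rfl, hc, rfl⟩ := h
  refine ⟨c.reverse, by simp, ?_, by simp⟩
  rw [List.pairwise_reverse]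
  exact hc.imp fun h t ht₁ ht₂ => h t ht₂ ht₁

theorem hasChains_reverse {w : List β} {k m : ℕ} :
    HasChains (flip I) w.reverse k m ↔ HasChains I w k m :=
  ⟨fun h => by simpa using h.reverse, fun h => h.reverse⟩

theorem map_fst_eq_append_three {γ : Type*} {c : List (β × γ)} {u v : List β} {a x z : β}
    (h : c.map Prod.fst = u ++ a :: x :: z :: v) :
    ∃ c₁ c₂ α β γ, c = c₁ ++ (a, α) :: (x, β) :: (z, γ) :: c₂ ∧ c₁.map Prod.fst = u ∧
      c₂.map Prod.fst = v := by
  obtain ⟨c₁, d₁, rfl, h₁, hd₁⟩ := List.map_eq_append_iff.1 h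
  obtain ⟨⟨_, α⟩, d₂, rfl, rfl, hd₂⟩ := List.map_eq_cons_iff.1 hd₁
  obtain ⟨⟨_, β⟩, d₃, rfl, rfl, hd₃⟩ := List.map_eq_cons_iff.1 hd₂
  obtain ⟨⟨_, γ⟩, c₂, rfl, rfl, hd₄⟩ := List.map_eq_cons_iff.1 hd₃
  exact ⟨c₁, c₂, α, β, γ, rfl, h₁, hd₄⟩

/-- Exchanging two `I`-related letters after a letter that separates them keeps chain sizes. -/
theorem HasChains.separate (h : ComplTrans I D) {a x z : β} (haz : I a z) (hax : D a x)
    {u v : List β} {k m : ℕ} (hw : HasChains I (u ++ a :: x :: z :: v) k m) :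
    HasChains I (u ++ a :: z :: x :: v) k m := by
  obtain ⟨c, hc, hp, hm⟩ := hw
  obtain ⟨c₁, c₂, p, q, r, rfl, rfl, rfl⟩ := map_fst_eq_append_three hc
  simp only [List.pairwise_append, List.pairwise_cons, List.mem_cons, forall_eq_or_imp] at hp
  obtain ⟨h₁, ⟨⟨hpq, hpr, hp₂⟩, ⟨hqr, hq₂⟩, hr₂, h₂⟩, h₁₂⟩ := hp
  have hnax := (h.right_iff a x).1 hax
  by_cases hsame : ∃ t, q = some t ∧ r = some t
  · obtain ⟨t, rfl, rfl⟩ := hsame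
    rcases p with _ | s
    · refine ⟨c₁ ++ (a, some t) :: (z, some t) :: (x, none) :: c₂, by simp, ?_, ?_⟩
      · simp only [List.pairwise_append, List.pairwise_cons, List.mem_cons, forall_eq_or_imp]
        refine ⟨h₁, ⟨⟨fun _ _ _ => haz, by simp [ColorRel], ?_⟩, ⟨by simp [ColorRel], hr₂⟩,
          by simp [ColorRel], h₂⟩, ?_⟩
        · intro e he t' ht' het
          exact h.trans_left haz (hr₂ e he t' ht' het)
        · intro e he
          obtain ⟨-, hex, hez, hee⟩ := h₁₂ e he
          exact ⟨fun t' ht' ht'' => h.left_of_right_of_left (hex t' ht' ht'') hax, hez,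
            by simp [ColorRel], hee⟩
      · simp at hm ⊢; omega
    · have hst : s ≠ t := by
        rintro rfl
        exact hnax (hpq s rfl rfl)
      let σ : Option (Fin k) → Option (Fin k) := Option.map (Equiv.swap s t)
      have hσ : ∀ o t', σ o = some t' ↔ o = some (Equiv.swap s t t') := by
        intro o t'
        cases o with
        | none => simp [σ]
        | some o =>
          simp only [σ, Option.map_some, Option.some.injEq]
          constructor
          · rintro rfl; simp
          · rintro rfl; simp
      refine ⟨c₁ ++ (a, some s) :: (z, some s) :: (x, some t) ::
        c₂.map (fun e => (e.1, σ e.2)), by simp, ?_, ?_⟩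
      · simp only [List.pairwise_append, List.pairwise_cons, List.mem_cons, forall_eq_or_imp,
          List.pairwise_map, List.forall_mem_map]
        refine ⟨h₁, ⟨⟨fun _ _ _ => haz, ?_, ?_⟩, ⟨?_, ?_⟩, ?_, ?_⟩, ?_⟩
        · rintro t' h₁ h₂
          exact absurd (Option.some.inj (h₁.trans h₂.symm)) hst
        · intro e he t' ht' het
          obtain rfl := Option.some.inj ht'
          rw [hσ, Equiv.swap_apply_left] at het
          exact h.trans_left haz (hr₂ e he t rfl het)
        · rintro t' h₁ h₂
          exact absurd (Option.some.inj (h₁.trans h₂.symm)) hst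
        · intro e he t' ht' het
          obtain rfl := Option.some.inj ht'
          rw [hσ, Equiv.swap_apply_left] at het
          exact hr₂ e he t rfl het
        · intro e he t' ht' het
          obtain rfl := Option.some.inj ht'
          rw [hσ, Equiv.swap_apply_right] at het
          exact h.left_of_left_of_right (hp₂ e he s rfl het) hax
        · refine h₂.imp ?_
          intro e f hef t' he hf
          rw [hσ] at he hf
          exact hef _ he hf
        · intro e he
          obtain ⟨hea, hex, hez, hee⟩ := h₁₂ e he
          refine ⟨hea, ?_, hex, ?_⟩
          · intro t' h₁ h₂
            exact h.trans_left (hea t' h₁ h₂) haz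
          · intro f hf t' h₁ h₂
            rw [hσ] at h₂
            by_cases hs : t' = s
            · subst hs
              rw [Equiv.swap_apply_left] at h₂
              exact h.trans_left (hea t' h₁ rfl) (h.trans_left haz (hr₂ f hf t rfl h₂))
            · by_cases ht : t' = t
              · subst ht
                rw [Equiv.swap_apply_right] at h₂
                exact h.trans_left (hex t' h₁ rfl)
                  (h.left_of_left_of_right (hp₂ f hf s rfl h₂) hax)
              · rw [Equiv.swap_apply_of_ne_of_ne hs ht] at h₂
                exact hee f hf t' h₁ h₂
      · have : ((fun p : β × Option (Fin k) => p.2.isSome) ∘ fun e : β × Option (Fin k) =>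
            (e.1, σ e.2)) = fun p => p.2.isSome := by
          funext e; simp [σ]
        simp only [List.countP_append, List.countP_cons, List.countP_map, this] at hm ⊢
        simpa using hm
  · refine ⟨c₁ ++ (a, p) :: (z, r) :: (x, q) :: c₂, by simp, ?_, ?_⟩
    · simp only [List.pairwise_append, List.pairwise_cons, List.mem_cons, forall_eq_or_imp]
      refine ⟨h₁, ⟨⟨hpr, hpq, hp₂⟩, ⟨fun t h₁ h₂ => absurd ⟨t, h₂, h₁⟩ hsame, hr₂⟩, hq₂, h₂⟩, ?_⟩
      intro e he
      obtain ⟨hea, hex, hez, hee⟩ := h₁₂ e he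
      exact ⟨hea, hez, hex, hee⟩
    · simp only [List.countP_append, List.countP_cons] at hm ⊢; omega

theorem HasChains.unite (h : ComplTrans I D) {a x z : β} (haz : I a z) (hax : D a x)
    {u v : List β} {k m : ℕ} (hw : HasChains I (u ++ a :: z :: x :: v) k m) :
    HasChains I (u ++ a :: x :: z :: v) k m := by
  obtain ⟨c, hc, hp, hm⟩ := hw
  obtain ⟨c₁, c₂, p, r, q, rfl, rfl, rfl⟩ := map_fst_eq_append_three hc
  simp only [List.pairwise_append, List.pairwise_cons, List.mem_cons, forall_eq_or_imp] at hp
  obtain ⟨h₁, ⟨⟨hpr, hpq, hp₂⟩, ⟨hrq, hr₂⟩, hq₂, h₂⟩, h₁₂⟩ := hp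
  refine ⟨c₁ ++ (a, p) :: (x, q) :: (z, r) :: c₂, by simp, ?_, ?_⟩
  · simp only [List.pairwise_append, List.pairwise_cons, List.mem_cons, forall_eq_or_imp]
    refine ⟨h₁, ⟨⟨hpq, hpr, hp₂⟩, ⟨fun _ _ _ => h.left_of_left_of_right haz hax, hq₂⟩,
      hr₂, h₂⟩, ?_⟩
    intro e he
    obtain ⟨hea, hez, hex, hee⟩ := h₁₂ e he
    exact ⟨hea, hex, hez, hee⟩
  · simp only [List.countP_append, List.countP_cons] at hm ⊢; omega

theorem hasChains_swap_after (h : ComplTrans I D) {a x z : β} (haz : I a z) (hax : D a x)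
    (u v : List β) (k m : ℕ) :
    HasChains I (u ++ [a, z, x] ++ v) k m ↔ HasChains I (u ++ [a, x, z] ++ v) k m := by
  simp only [List.append_assoc, List.cons_append, List.nil_append]
  exact ⟨HasChains.unite h haz hax, HasChains.separate h haz hax⟩

theorem hasChains_swap_before (h : ComplTrans I D) {b x z : β} (hbx : I b x) (hzx : D z x)
    (u v : List β) (k m : ℕ) :
    HasChains I (u ++ [b, z, x] ++ v) k m ↔ HasChains I (u ++ [z, b, x] ++ v) k m := by
  rw [← hasChains_reverse, ← hasChains_reverse (w := u ++ [z, b, x] ++ v)]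
  simpa using (hasChains_swap_after h.flip (a := x) (x := z) (z := b) hbx hzx
    v.reverse u.reverse k m).symm

/-- Two words are interchangeable, within any longer word, as regards the sizes of unions of
disjoint `I`-chains and of disjoint `D`-chains. -/
def ChainEquiv (I D : β → β → Prop) (w w' : List β) : Prop :=
  ∀ u v k m, (HasChains I (u ++ w ++ v) k m ↔ HasChains I (u ++ w' ++ v) k m) ∧
    (HasChains D (u ++ w ++ v) k m ↔ HasChains D (u ++ w' ++ v) k m)

namespace ChainEquiv

protected theorem refl (w : List β) : ChainEquiv I D w w := fun _ _ _ _ => ⟨Iff.rfl, Iff.rfl⟩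

protected theorem trans {w₁ w₂ w₃ : List β} (h₁ : ChainEquiv I D w₁ w₂)
    (h₂ : ChainEquiv I D w₂ w₃) : ChainEquiv I D w₁ w₃ := fun u v k m =>
  ⟨(h₁ u v k m).1.trans (h₂ u v k m).1, (h₁ u v k m).2.trans (h₂ u v k m).2⟩

theorem append_left {w w' : List β} (h : ChainEquiv I D w w') (p : List β) :
    ChainEquiv I D (p ++ w) (p ++ w') := fun u v k m => by
  simpa using h (u ++ p) v k m

theorem append_right {w w' : List β} (h : ChainEquiv I D w w') (s : List β) :
    ChainEquiv I D (w ++ s) (w' ++ s) := fun u v k m => by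
  simpa using h u (s ++ v) k m

theorem cons {w w' : List β} (h : ChainEquiv I D w w') (a : β) :
    ChainEquiv I D (a :: w) (a :: w') :=
  h.append_left [a]

theorem swap_after (h : ComplTrans I D) {a x z : β} (haz : I a z) (hax : D a x) (s : List β) :
    ChainEquiv I D (a :: z :: x :: s) (a :: x :: z :: s) :=
  append_right (w := [a, z, x]) (w' := [a, x, z]) (fun u v k m =>
    ⟨hasChains_swap_after h haz hax u v k m,
      (hasChains_swap_after h.symm hax haz u v k m).symm⟩) s

theorem swap_before (h : ComplTrans I D) {b x z : β} (hbx : I b x) (hzx : D z x) (s : List β) :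
    ChainEquiv I D (b :: z :: x :: s) (z :: b :: x :: s) :=
  append_right (w := [b, z, x]) (w' := [z, b, x]) (fun u v k m =>
    ⟨hasChains_swap_before h hbx hzx u v k m,
      (hasChains_swap_before h.symm hzx hbx u v k m).symm⟩) s

theorem append_singleton (h : ComplTrans I D) {a x : β} {r : List β}
    (hr : (a :: r).Pairwise I) (hax : D a x) :
    ChainEquiv I D (a :: (r ++ [x])) (a :: x :: r) := by
  induction r generalizing a with
  | nil => exact .refl _
  | cons b r ih =>
    obtain ⟨ha, hr⟩ := List.pairwise_cons.1 hr
    have hab : I a b := ha b (by simp)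
    have hbx : D b x := by
      rw [h.right_iff]
      exact fun hbx => (h.right_iff a x).1 hax (h.trans_left hab hbx)
    exact ((ih hr hbx).cons a).trans (swap_after h hab hax r)

end ChainEquiv

end Chains

section Labels

variable {β : Type*} {I D : β → β → Prop}

theorem List.countP_lt_eq_sum {γ : Type*} (f : γ → ℕ) (l : List γ) (n : ℕ) :
    l.countP (fun e => decide (f e < n)) =
      ∑ j ∈ Finset.range n, l.countP (fun e => decide (f e = j)) := by
  induction n with
  | zero => simp
  | succ n ih =>
    rw [Finset.sum_range_succ, ← ih]
    clear ih
    induction l with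
    | nil => simp
    | cons a l ih =>
      simp only [List.countP_cons, decide_eq_true_eq, ih]
      split_ifs <;> omega

theorem hasChains_of_labels {γ : Type*} (f : γ → β) (ρ : γ → ℕ) {l : List γ}
    (hρ : l.Pairwise fun p q => ρ p = ρ q → I (f p) (f q)) (k : ℕ) :
    HasChains I (l.map f) k (l.countP fun e => decide (ρ e < k)) := by
  refine ⟨l.map fun e => (f e, if h : ρ e < k then some ⟨ρ e, h⟩ else none), ?_, ?_, ?_⟩
  · simp
  · rw [List.pairwise_map]
    refine hρ.imp ?_
    intro p q hpq t hp hq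
    apply hpq
    dsimp only at hp hq
    split_ifs at hp hq
    rw [← hq] at hp
    simpa using hp
  · rw [List.countP_map]
    congr 1
    funext e
    by_cases h : ρ e < k <;> simp [h]

theorem HasChains.le_sum_min (h : ComplTrans I D) {γ : Type*} (f : γ → β) (κ : γ → ℕ)
    {l : List γ} (hκ : l.Pairwise fun p q => κ p = κ q → D (f p) (f q)) {n : ℕ}
    (hn : ∀ e ∈ l, κ e < n) {k m : ℕ} (hm : HasChains I (l.map f) k m) :
    m ≤ ∑ j ∈ Finset.range n, min k (l.countP fun e => decide (κ e = j)) := by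
  obtain ⟨c, hc, hp, rfl⟩ := hm
  obtain ⟨z, rfl, rfl⟩ : ∃ z : List (γ × Option (Fin k)), z.map Prod.fst = l ∧
      z.map (fun e => (f e.1, e.2)) = c := by
    clear hp hκ hn
    induction l generalizing c with
    | nil => exact ⟨[], by simpa using hc.symm⟩
    | cons a l ih =>
      obtain ⟨⟨_, o⟩, c', rfl, rfl, hc'⟩ := List.map_eq_cons_iff.1 hc
      obtain ⟨z, rfl, rfl⟩ := ih c' hc'
      exact ⟨(a, o) :: z, by simp⟩
  rw [List.pairwise_map] at hp hκ
  have hsplit : (z.map fun e => (f e.1, e.2)).countP (fun p => p.2.isSome) =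
      ∑ j ∈ Finset.range n, (z.filter fun e => e.2.isSome).countP
        (fun e => decide (κ e.1 = j)) := by
    rw [← List.countP_lt_eq_sum (fun e : γ × Option (Fin k) => κ e.1), List.countP_map,
      List.countP_filter]
    refine List.countP_congr fun e he => ?_
    simp [hn e.1 (List.mem_map_of_mem he)]
  rw [hsplit]
  refine Finset.sum_le_sum fun j _ => le_min ?_ ?_
  · have hnodup : ((z.filter fun e => decide (κ e.1 = j)).filterMap Prod.snd).Nodup := by
      rw [List.Nodup, List.pairwise_filterMap, List.pairwise_filter]
      refine (hp.and hκ).imp ?_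
      rintro p q ⟨hI, hD⟩ hpj hqj s hs t ht rfl
      simp only [decide_eq_true_eq] at hpj hqj
      exact (h.right_iff _ _).1 (hD (hpj.trans hqj.symm)) (hI s hs ht)
    have := hnodup.length_le_card
    rw [Fintype.card_fin] at this
    refine le_trans (le_of_eq ?_) this
    rw [List.length_filterMap_eq_countP, List.countP_filter, List.countP_filter]
    refine List.countP_congr fun e _ => ?_
    simp [and_comm]
  · rw [List.countP_map]
    exact List.filter_sublist.countP_le

end Labels

section Tableau

variable {β : Type*} {I D : β → β → Prop}

/-- The row `s` fits under the row `r`: it is no longer, and columns are `D`-chains when read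
upwards. -/
def RowBelow (D : β → β → Prop) : List β → List β → Prop
  | _, [] => True
  | [], _ :: _ => False
  | a :: r, b :: s => D b a ∧ RowBelow D r s

/-- Rows are `I`-chains, and every row fits under the previous one. -/
def IsTableau (I D : β → β → Prop) : List (List β) → Prop
  | [] => True
  | r :: rs => r.Pairwise I ∧ RowBelow D r (rs.headD []) ∧ IsTableau I D rs

/-- The reading word: rows are read from the last one to the first one. -/
def readingWord : List (List β) → List β
  | [] => []
  | r :: rs => readingWord rs ++ r

/-- The reading word with every letter labelled by its row (counted from `i`) and column. -/
def labelledWord : ℕ → List (List β) → List (β × ℕ × ℕ)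
  | _, [] => []
  | i, r :: rs => labelledWord (i + 1) rs ++ r.zipIdx.map fun p => (p.1, i, p.2)

theorem RowBelow.trans (h : ComplTrans I D) {r s t : List β} (hrs : RowBelow D r s)
    (hst : RowBelow D s t) : RowBelow D r t := by
  induction r generalizing s t with
  | nil => cases s <;> cases t <;> simp_all [RowBelow]
  | cons a r ih =>
    cases s <;> cases t <;> simp_all only [RowBelow]
    exact ⟨h.trans_right hst.1 hrs.1, ih hrs.2 hst.2⟩

theorem RowBelow.length_le {r s : List β} (h : RowBelow D r s) : s.length ≤ r.length := by
  induction r generalizing s with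
  | nil => cases s <;> simp_all [RowBelow]
  | cons a r ih =>
    cases s with
    | nil => simp
    | cons b s => simpa using ih h.2

theorem RowBelow.getElem? {r s : List β} (h : RowBelow D r s) {j : ℕ} {a b : β}
    (ha : r[j]? = some a) (hb : s[j]? = some b) : D b a := by
  induction r generalizing s j with
  | nil => simp at ha
  | cons a' r ih =>
    cases s with
    | nil => simp at hb
    | cons b' s =>
      cases j with
      | zero =>
        simp only [List.getElem?_cons_zero, Option.some.injEq] at ha hb
        exact ha ▸ hb ▸ h.1
      | succ j => exact ih h.2 (by simpa using ha) (by simpa using hb)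

theorem IsTableau.rowBelow (h : ComplTrans I D) {r : List β} {rs : List (List β)}
    (hT : IsTableau I D (r :: rs)) : ∀ s ∈ rs, RowBelow D r s := by
  induction rs generalizing r with
  | nil => simp
  | cons s₀ rs ih =>
    obtain ⟨-, hrs, hT'⟩ := hT
    intro s hs
    rcases List.mem_cons.1 hs with rfl | hs
    · exact hrs
    · exact RowBelow.trans h hrs (ih hT' s hs)

theorem map_fst_labelledWord (i : ℕ) (T : List (List β)) :
    (labelledWord i T).map Prod.fst = readingWord T := by
  induction T generalizing i with
  | nil => rfl
  | cons r rs ih => simp [labelledWord, readingWord, ih, Function.comp_def]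

theorem mem_labelledWord {i : ℕ} {T : List (List β)} {e : β × ℕ × ℕ}
    (he : e ∈ labelledWord i T) :
    i ≤ e.2.1 ∧ e.2.1 < i + T.length ∧ ∃ r ∈ T, r[e.2.2]? = some e.1 := by
  induction T generalizing i with
  | nil => simp [labelledWord] at he
  | cons r rs ih =>
    rcases List.mem_append.1 he with he | he
    · obtain ⟨h₁, h₂, s, hs, hse⟩ := ih he
      exact ⟨by omega, by simp; omega, s, by simp [hs], hse⟩
    · obtain ⟨p, hp, rfl⟩ := List.mem_map.1 he
      exact ⟨le_rfl, by simp, r, by simp, List.mem_zipIdx_iff_getElem?.1 hp⟩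

theorem pairwise_row_labelledWord (i : ℕ) {T : List (List β)} (hT : IsTableau I D T) :
    (labelledWord i T).Pairwise fun p q => p.2.1 = q.2.1 → I p.1 q.1 := by
  induction T generalizing i with
  | nil => simp [labelledWord]
  | cons r rs ih =>
    rw [labelledWord, List.pairwise_append]
    refine ⟨ih _ hT.2.2, ?_, ?_⟩
    · rw [List.pairwise_map]
      have hr := hT.1
      rw [← List.zipIdx_map_fst 0 r, List.pairwise_map] at hr
      exact hr.imp fun {a b} (h : I a.1 b.1) _ => h
    · intro p hp q hq hpq
      obtain ⟨q, -, rfl⟩ := List.mem_map.1 hq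
      have := (mem_labelledWord hp).1
      dsimp only at hpq
      omega

theorem pairwise_col_labelledWord (h : ComplTrans I D) (i : ℕ) {T : List (List β)}
    (hT : IsTableau I D T) :
    (labelledWord i T).Pairwise fun p q => p.2.2 = q.2.2 → D p.1 q.1 := by
  induction T generalizing i with
  | nil => simp [labelledWord]
  | cons r rs ih =>
    rw [labelledWord, List.pairwise_append]
    refine ⟨ih _ hT.2.2, ?_, ?_⟩
    · rw [List.pairwise_map]
      have hr : (r.zipIdx.map Prod.snd).Nodup := by
        rw [List.zipIdx_map_snd]
        exact List.nodup_range'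
      rw [List.Nodup, List.pairwise_map] at hr
      exact hr.imp fun h h' => absurd h' h
    · intro p hp q hq hpq
      obtain ⟨q, hqr, rfl⟩ := List.mem_map.1 hq
      obtain ⟨-, -, s, hs, hsp⟩ := mem_labelledWord hp
      dsimp only at hpq
      rw [hpq] at hsp
      exact (hT.rowBelow h s hs).getElem? (List.mem_zipIdx_iff_getElem?.1 hqr) hsp

theorem countP_row_lt_labelledWord (i k : ℕ) (T : List (List β)) :
    (labelledWord i T).countP (fun e => decide (e.2.1 < i + k)) =
      ((T.map List.length).take k).sum := by
  induction T generalizing i k with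
  | nil => simp [labelledWord]
  | cons r rs ih =>
    rw [labelledWord, List.countP_append, List.countP_map]
    cases k with
    | zero =>
      have hzero : (labelledWord (i + 1) rs).countP (fun e => decide (e.2.1 < i + 0)) = 0 := by
        rw [List.countP_eq_zero]
        intro e he
        have := (mem_labelledWord he).1
        simp; omega
      rw [hzero]
      simp [Function.comp_def]
    | succ k =>
      have := ih (i + 1) k
      rw [show i + 1 + k = i + (k + 1) by omega] at this
      rw [this]
      simp [Function.comp_def, add_comm]

theorem countP_row_eq_labelledWord (i j : ℕ) (T : List (List β)) :
    (labelledWord i T).countP (fun e => decide (e.2.1 = i + j)) =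
      (T.map List.length).getD j 0 := by
  induction T generalizing i j with
  | nil => simp [labelledWord]
  | cons r rs ih =>
    rw [labelledWord, List.countP_append, List.countP_map]
    cases j with
    | zero =>
      have hzero : (labelledWord (i + 1) rs).countP (fun e => decide (e.2.1 = i + 0)) = 0 := by
        rw [List.countP_eq_zero]
        intro e he
        have := (mem_labelledWord he).1
        simp; omega
      rw [hzero]
      simp [Function.comp_def]
    | succ j =>
      have := ih (i + 1) j
      rw [show i + 1 + j = i + (j + 1) by omega] at this
      rw [this]
      simp [Function.comp_def]

theorem countP_col_eq_labelledWord (i j : ℕ) (T : List (List β)) :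
    (labelledWord i T).countP (fun e => decide (e.2.2 = j)) =
      T.countP (fun r => decide (j < r.length)) := by
  induction T generalizing i with
  | nil => simp [labelledWord]
  | cons r rs ih =>
    rw [labelledWord, List.countP_append, List.countP_map, ih, List.countP_cons]
    congr 1
    have : r.zipIdx.countP ((fun e : β × ℕ × ℕ => decide (e.2.2 = j)) ∘
        fun p : β × ℕ => (p.1, i, p.2)) = (r.zipIdx.map Prod.snd).count j := by
      rw [List.count, List.countP_map]
      congr 1
    rw [this, List.zipIdx_map_snd]
    by_cases hj : j < r.length <;> simp [hj]

theorem sum_range_ite_lt (k n : ℕ) :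
    ∑ j ∈ Finset.range k, (if j < n then 1 else 0) = min k n := by
  induction k with
  | zero => simp
  | succ k ih =>
    rw [Finset.sum_range_succ, ih]
    split_ifs <;> omega

theorem sum_min_getD_length (k : ℕ) (T : List (List β)) :
    ∑ i ∈ Finset.range T.length, min k ((T.map List.length).getD i 0) =
      ∑ j ∈ Finset.range k, T.countP (fun r => decide (j < r.length)) := by
  induction T with
  | nil => simp
  | cons r rs ih =>
    simp only [List.length_cons, Finset.sum_range_succ', List.countP_cons, decide_eq_true_eq,
      Finset.sum_add_distrib, sum_range_ite_lt, ← ih, List.map_cons, List.getD_cons_succ,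
      List.getD_cons_zero]

theorem sum_countP_lt_length {n : ℕ} {T : List (List β)} (hT : ∀ r ∈ T, r.length ≤ n) :
    ∑ j ∈ Finset.range n, T.countP (fun r => decide (j < r.length)) =
      (T.map List.length).sum := by
  induction T with
  | nil => simp
  | cons r rs ih =>
    have := hT r (by simp)
    simp only [List.countP_cons, decide_eq_true_eq, Finset.sum_add_distrib, sum_range_ite_lt,
      ih fun s hs => hT s (by simp [hs]), List.map_cons, List.sum_cons]
    omega

theorem IsTableau.min_countP (h : ComplTrans I D) {T : List (List β)} (hT : IsTableau I D T)
    (j k : ℕ) : min k (T.countP fun r => decide (j < r.length)) =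
      (T.take k).countP fun r => decide (j < r.length) := by
  induction T generalizing k with
  | nil => simp
  | cons r rs ih =>
    cases k with
    | zero => simp
    | succ k =>
      rw [List.take_succ_cons, List.countP_cons, List.countP_cons, ← ih hT.2.2]
      by_cases hj : j < r.length
      · simp [hj]
      · have : rs.countP (fun r => decide (j < r.length)) = 0 := by
          rw [List.countP_eq_zero]
          intro s hs
          have := (hT.rowBelow h s hs).length_le
          simp; omega
        simp [hj, this]

theorem IsTableau.isGreatest_rows (h : ComplTrans I D) {T : List (List β)}
    (hT : IsTableau I D T) (k : ℕ) :
    IsGreatest {m | HasChains I (readingWord T) k m} ((T.map List.length).take k).sum := by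
  have hlen : ∀ r ∈ T, r.length ≤ (T.map List.length).sum := fun r hr =>
    List.le_sum_of_mem (List.mem_map_of_mem hr)
  rw [← map_fst_labelledWord 0 T]
  constructor
  · have := hasChains_of_labels Prod.fst (fun e : β × ℕ × ℕ => e.2.1)
      (pairwise_row_labelledWord 0 hT) k
    have hcount := countP_row_lt_labelledWord 0 k T
    rw [zero_add] at hcount
    rwa [hcount] at this
  · intro m hm
    refine (HasChains.le_sum_min h Prod.fst (fun e : β × ℕ × ℕ => e.2.2)
      (pairwise_col_labelledWord h 0 hT) (n := (T.map List.length).sum) ?_ hm).trans (le_of_eq ?_)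
    · intro e he
      obtain ⟨-, -, r, hr, hre⟩ := mem_labelledWord he
      exact (List.getElem?_eq_some_iff.1 hre).1.trans_le (hlen r hr)
    · simp only [countP_col_eq_labelledWord, hT.min_countP h]
      rw [sum_countP_lt_length fun r hr => hlen r (List.mem_of_mem_take hr), List.map_take]

theorem IsTableau.isGreatest_cols (h : ComplTrans I D) {T : List (List β)}
    (hT : IsTableau I D T) (k : ℕ) :
    IsGreatest {m | HasChains D (readingWord T) k m}
      (∑ j ∈ Finset.range k, T.countP fun r => decide (j < r.length)) := by
  rw [← map_fst_labelledWord 0 T]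
  constructor
  · have := hasChains_of_labels Prod.fst (fun e : β × ℕ × ℕ => e.2.2)
      (pairwise_col_labelledWord h 0 hT) k
    rw [List.countP_lt_eq_sum (fun e : β × ℕ × ℕ => e.2.2)] at this
    simpa only [countP_col_eq_labelledWord, Set.mem_ofPred_eq] using this
  · intro m hm
    refine (HasChains.le_sum_min h.symm Prod.fst (fun e : β × ℕ × ℕ => e.2.1)
      (pairwise_row_labelledWord 0 hT) (n := T.length) ?_ hm).trans (le_of_eq ?_)
    · intro e he
      simpa using (mem_labelledWord he).2.1
    · rw [← sum_min_getD_length]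
      refine Finset.sum_congr rfl fun i _ => ?_
      rw [← countP_row_eq_labelledWord 0 i T, zero_add]

end Tableau

section Insertion

variable {β : Type*} [LinearOrder β]

/-- The relation between consecutive letters of an increasing word. -/
def IncRel (parity : β → Bool) (x y : β) : Prop := x < y ∨ (x = y ∧ parity x = true)

/-- The relation between consecutive letters of a decreasing word. -/
def DecRel (parity : β → Bool) (x y : β) : Prop := y < x ∨ (x = y ∧ parity x = false)

variable (parity : β → Bool)

theorem complTrans_incRel_decRel : ComplTrans (IncRel parity) (DecRel parity) where
  trans_left := by
    rintro a b c (h₁ | ⟨rfl, h₁⟩) (h₂ | ⟨rfl, h₂⟩)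
    exacts [.inl (h₁.trans h₂), .inl h₁, .inl h₂, .inr ⟨rfl, h₁⟩]
  trans_right := by
    rintro a b c (h₁ | ⟨rfl, h₁⟩) (h₂ | ⟨rfl, h₂⟩)
    exacts [.inl (h₂.trans h₁), .inl h₁, .inl h₂, .inr ⟨rfl, h₁⟩]
  right_iff a b := by
    rcases lt_trichotomy a b with h | rfl | h
    · simp [IncRel, DecRel, h, h.not_gt, h.ne]
    · simp [IncRel, DecRel]
    · simp [IncRel, DecRel, h, h.not_gt, h.ne']

variable {parity}

theorem bump_iff_decRel {x y : β} :
    (if parity x then x < y else x ≤ y) ↔ DecRel parity y x := by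
  rcases lt_trichotomy x y with h | rfl | h
  · simp [DecRel, h, h.le]
  · simp [DecRel]
  · simp [DecRel, h.not_gt, h.not_ge, h.ne]

theorem bumpRow_cons_of_decRel {x y : β} (h : DecRel parity y x) (ys : List β) :
    bumpRow parity x (y :: ys) = (x :: ys, some y) := by
  rw [bumpRow, if_pos (bump_iff_decRel.2 h)]

theorem bumpRow_cons_of_incRel {x y : β} (h : IncRel parity y x) (ys : List β) :
    bumpRow parity x (y :: ys) =
      (y :: (bumpRow parity x ys).1, (bumpRow parity x ys).2) := by
  rw [bumpRow, if_neg fun h' =>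
    ((complTrans_incRel_decRel parity).left_iff y x).1 h (bump_iff_decRel.1 h')]

theorem incRel_or_decRel (parity : β → Bool) (x y : β) :
    IncRel parity x y ∨ DecRel parity x y := by
  rw [(complTrans_incRel_decRel parity).right_iff]
  exact em _

theorem mem_of_mem_bumpRow {x b : β} {r : List β} (hb : b ∈ (bumpRow parity x r).1) :
    b = x ∨ b ∈ r := by
  induction r with
  | nil => simpa [bumpRow] using hb
  | cons a r ih =>
    rcases incRel_or_decRel parity a x with h | h
    · rw [bumpRow_cons_of_incRel h] at hb
      rcases List.mem_cons.1 hb with rfl | hb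
      · simp
      · exact (ih hb).imp_right fun h => by simp [h]
    · rw [bumpRow_cons_of_decRel h] at hb
      exact (List.mem_cons.1 hb).imp_right fun h => by simp [h]

theorem decRel_of_bumpRow {x y : β} {r : List β} (hy : (bumpRow parity x r).2 = some y) :
    DecRel parity y x := by
  induction r with
  | nil => simp [bumpRow] at hy
  | cons a r ih =>
    rcases incRel_or_decRel parity a x with h | h
    · rw [bumpRow_cons_of_incRel h] at hy
      exact ih hy
    · rw [bumpRow_cons_of_decRel h] at hy
      exact Option.some.inj hy ▸ h

theorem decRel_trans_incRel {x y a : β} (hy : DecRel parity y x) (ha : IncRel parity a x) :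
    DecRel parity y a :=
  (complTrans_incRel_decRel parity).symm.left_of_right_of_left hy ha

theorem pairwise_bumpRow (x : β) {r : List β} (hr : r.Pairwise (IncRel parity)) :
    (bumpRow parity x r).1.Pairwise (IncRel parity) := by
  induction r with
  | nil => simp [bumpRow]
  | cons a r ih =>
    obtain ⟨ha, hr⟩ := List.pairwise_cons.1 hr
    rcases incRel_or_decRel parity a x with h | h
    · rw [bumpRow_cons_of_incRel h]
      refine List.pairwise_cons.2 ⟨fun b hb => ?_, ih hr⟩
      rcases mem_of_mem_bumpRow hb with rfl | hb
      · exact h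
      · exact ha b hb
    · rw [bumpRow_cons_of_decRel h]
      exact List.pairwise_cons.2 ⟨fun b hb =>
        (complTrans_incRel_decRel parity).left_of_left_of_right (ha b hb) h, hr⟩

theorem RowBelow.bumpRow_left (x : β) {r s : List β} (hrs : RowBelow (DecRel parity) r s) :
    RowBelow (DecRel parity) (bumpRow parity x r).1 s := by
  induction r generalizing s with
  | nil => cases s <;> simp_all [RowBelow]
  | cons a r ih =>
    cases s with
    | nil => simp [RowBelow]
    | cons b s =>
      rcases incRel_or_decRel parity a x with h | h
      · rw [bumpRow_cons_of_incRel h]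
        exact ⟨hrs.1, ih hrs.2⟩
      · rw [bumpRow_cons_of_decRel h]
        exact ⟨(complTrans_incRel_decRel parity).trans_right hrs.1 h, hrs.2⟩

theorem RowBelow.bumpRow {x y : β} {r s : List β} (hrs : RowBelow (DecRel parity) r s)
    (hy : (bumpRow parity x r).2 = some y) :
    RowBelow (DecRel parity) (bumpRow parity x r).1 (bumpRow parity y s).1 := by
  have hyx := decRel_of_bumpRow hy
  induction r generalizing s with
  | nil => simp [_root_.bumpRow] at hy
  | cons a r ih =>
    rcases incRel_or_decRel parity a x with h | h
    · rw [bumpRow_cons_of_incRel h] at hy ⊢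
      have hya := decRel_trans_incRel hyx h
      cases s with
      | nil => exact ⟨hya, by simp [RowBelow]⟩
      | cons b s =>
        rcases incRel_or_decRel parity b y with h' | h'
        · rw [bumpRow_cons_of_incRel h']
          exact ⟨hrs.1, ih hrs.2 hy⟩
        · rw [bumpRow_cons_of_decRel h']
          exact ⟨hya, hrs.2.bumpRow_left x⟩
    · rw [bumpRow_cons_of_decRel h] at hy ⊢
      obtain rfl := Option.some.inj hy
      cases s with
      | nil => exact ⟨h, by simp [RowBelow]⟩
      | cons b s =>
        rw [bumpRow_cons_of_decRel hrs.1]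
        exact ⟨h, hrs.2⟩

theorem bumpRow_eq_append {x : β} {r : List β} (hx : (bumpRow parity x r).2 = none) :
    (bumpRow parity x r).1 = r ++ [x] := by
  induction r with
  | nil => rfl
  | cons a r ih =>
    rcases incRel_or_decRel parity a x with h | h
    · rw [bumpRow_cons_of_incRel h] at hx ⊢
      simp [ih hx]
    · simp [bumpRow_cons_of_decRel h] at hx

theorem exists_bumpRow_eq_cons (x : β) (r : List β) :
    ∃ b s, (bumpRow parity x r).1 = b :: s ∧ (b = x ∨ (b ∈ r ∧ IncRel parity b x)) := by
  cases r with
  | nil => exact ⟨x, [], rfl, .inl rfl⟩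
  | cons a r =>
    rcases incRel_or_decRel parity a x with h | h
    · rw [bumpRow_cons_of_incRel h]
      exact ⟨a, _, rfl, .inr ⟨by simp, h⟩⟩
    · rw [bumpRow_cons_of_decRel h]
      exact ⟨x, _, rfl, .inl rfl⟩

theorem chainEquiv_bumpRow {x y : β} {r : List β} (hr : r.Pairwise (IncRel parity))
    (hy : (bumpRow parity x r).2 = some y) :
    ChainEquiv (IncRel parity) (DecRel parity) (r ++ [x]) (y :: (bumpRow parity x r).1) := by
  have hyx := decRel_of_bumpRow hy
  have hID := complTrans_incRel_decRel parity
  induction r with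
  | nil => simp [bumpRow] at hy
  | cons a r ih =>
    rcases incRel_or_decRel parity a x with h | h
    · rw [bumpRow_cons_of_incRel h] at hy ⊢
      obtain ⟨ha, hr⟩ := List.pairwise_cons.1 hr
      refine ((ih hr hy).cons a).trans ?_
      obtain ⟨b, s, hbs, hb⟩ := exists_bumpRow_eq_cons (parity := parity) x r
      rw [hbs]
      rcases hb with rfl | ⟨hb, hbx⟩
      · exact .swap_before hID h hyx s
      · exact .swap_before hID (ha b hb) (decRel_trans_incRel hyx hbx) s
    · rw [bumpRow_cons_of_decRel h] at hy ⊢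
      obtain rfl := Option.some.inj hy
      exact .append_singleton hID hr h

theorem headD_insertTab (x : β) (T : List (List β)) :
    (insertTab parity x T).headD [] = (bumpRow parity x (T.headD [])).1 := by
  cases T with
  | nil => rfl
  | cons r rs =>
    rw [insertTab]
    rcases h : (bumpRow parity x r).2 with _ | y <;> simp

theorem IsTableau.insertTab (x : β) {T : List (List β)}
    (hT : IsTableau (IncRel parity) (DecRel parity) T) :
    IsTableau (IncRel parity) (DecRel parity) (insertTab parity x T) := by
  induction T generalizing x with
  | nil => simp [_root_.insertTab, IsTableau, RowBelow]
  | cons r rs ih =>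
    obtain ⟨hr, hrs, hT⟩ := hT
    rw [_root_.insertTab]
    rcases h : (bumpRow parity x r).2 with _ | y
    · simp only
      exact ⟨pairwise_bumpRow x hr, hrs.bumpRow_left x, hT⟩
    · simp only
      refine ⟨pairwise_bumpRow x hr, ?_, ih y hT⟩
      rw [headD_insertTab]
      exact hrs.bumpRow h

theorem chainEquiv_insertTab (x : β) {T : List (List β)}
    (hT : IsTableau (IncRel parity) (DecRel parity) T) :
    ChainEquiv (IncRel parity) (DecRel parity) (readingWord T ++ [x])
      (readingWord (insertTab parity x T)) := by
  induction T generalizing x with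
  | nil => exact .refl _
  | cons r rs ih =>
    obtain ⟨hr, -, hT⟩ := hT
    rw [insertTab]
    rcases h : (bumpRow parity x r).2 with _ | y
    · simp only [readingWord, bumpRow_eq_append h, List.append_assoc]
      exact .refl _
    · simp only [readingWord, List.append_assoc]
      refine ((chainEquiv_bumpRow hr h).append_left _).trans ?_
      simpa using (ih y hT).append_right (bumpRow parity x r).1

theorem isTableau_rskTab_and_chainEquiv (parity : β → Bool) (w : List β) :
    IsTableau (IncRel parity) (DecRel parity) (rskTab parity w) ∧
      ChainEquiv (IncRel parity) (DecRel parity) w (readingWord (rskTab parity w)) := by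
  induction w using List.reverseRecOn with
  | nil => exact ⟨trivial, .refl _⟩
  | append_singleton w x ih =>
    have : rskTab parity (w ++ [x]) = insertTab parity x (rskTab parity w) := by
      simp [rskTab]
    rw [this]
    exact ⟨ih.1.insertTab x, (ih.2.append_right [x]).trans (chainEquiv_insertTab x ih.1)⟩

end Insertion

theorem List.countP_ofFn_eq_card {γ : Type*} {n : ℕ} (f : Fin n → γ) (p : γ → Bool) :
    (List.ofFn f).countP p = (Finset.univ.filter fun i => p (f i) = true).card := by
  induction n with
  | zero => simp
  | succ n ih =>
    rw [List.ofFn_succ, List.countP_cons, ih, Finset.card_filter, Finset.card_filter,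
      Fin.sum_univ_succ, add_comm]

theorem hasChains_iff {β : Type*} {I : β → β → Prop} {w : List β} {k m : ℕ} :
    HasChains I w k m ↔ ∃ A : Fin k → Finset (Fin w.length),
      (∀ s t, s ≠ t → Disjoint (A s) (A t)) ∧
      (∀ t, ∀ i ∈ A t, ∀ j ∈ A t, i < j → I (w.get i) (w.get j)) ∧
      ∑ t, (A t).card = m := by
  classical
  have hcard : ∀ A : Fin k → Finset (Fin w.length), (∀ s t, s ≠ t → Disjoint (A s) (A t)) →
      ∑ t, (A t).card = (Finset.univ.filter fun i => ∃ t, i ∈ A t).card := by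
    intro A hA
    rw [← Finset.card_biUnion fun s _ t _ hst => hA s t hst]
    congr 1
    ext i
    simp
  constructor
  · rintro ⟨c, rfl, hc, rfl⟩
    have hlen : (c.map Prod.fst).length = c.length := c.length_map Prod.fst
    let A : Fin k → Finset (Fin (c.map Prod.fst).length) := fun t =>
      Finset.univ.filter fun i => (c.get (i.cast hlen)).2 = some t
    have hA : ∀ s t, s ≠ t → Disjoint (A s) (A t) := by
      intro s t hst
      rw [Finset.disjoint_left]
      intro i hs ht
      simp only [A, Finset.mem_filter, Finset.mem_univ, true_and] at hs ht
      exact hst (Option.some.inj (hs.symm.trans ht))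
    refine ⟨A, hA, ?_, ?_⟩
    · intro t i hi j hj hij
      simp only [A, Finset.mem_filter, Finset.mem_univ, true_and] at hi hj
      have := List.pairwise_iff_getElem.1 hc i j (by simpa using i.2) (by simpa using j.2) hij
      simpa using this t hi hj
    · rw [hcard A hA]
      conv_rhs => rw [← List.ofFn_getElem (xs := c), List.countP_ofFn_eq_card]
      refine Finset.card_bij (fun i _ => i.cast hlen) ?_ ?_ ?_
      · intro i hi
        simpa [A, Option.isSome_iff_exists] using hi
      · intro i _ j _ hij
        simpa using hij
      · intro i hi
        exact ⟨i.cast hlen.symm, by simpa [A, Option.isSome_iff_exists] using hi, by simp⟩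
  · rintro ⟨A, hA, hI, rfl⟩
    let f : Fin w.length → Option (Fin k) := fun i =>
      if h : ∃ t, i ∈ A t then some h.choose else none
    have hf : ∀ i t, f i = some t → i ∈ A t := by
      intro i t hi
      simp only [f] at hi
      split_ifs at hi with h
      exact Option.some.inj hi ▸ h.choose_spec
    refine ⟨List.ofFn fun i => (w.get i, f i), ?_, ?_, ?_⟩
    · rw [List.map_ofFn]
      exact List.ofFn_get w
    · rw [List.pairwise_ofFn]
      intro i j hij t hi hj
      exact hI t i (hf i t hi) j (hf j t hj) hij
    · rw [List.countP_ofFn_eq_card, hcard A hA]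
      congr 1
      ext i
      by_cases h : ∃ t, i ∈ A t <;> simp [f, h]

/-- Greene's theorem for the generalized RSK algorithm: for every `k ≥ 1`, the sum of the
first `k` row lengths of the shape `φ(w)` equals `r_k(w)`, the maximal total size of a
union of `k` position-disjoint increasing subsequences of `w`, and the sum of the first
`k` column lengths equals `c_k(w)`, the analogous quantity for decreasing subsequences.
Here consecutive letters `x, y` of an increasing subsequence satisfy `x < y`, or `x = y`
with `x` even, and of a decreasing one `x > y`, or `x = y` with `x` odd; subsequences are
encoded by their sets of positions. -/
theorem stmt17 (parity : α → Bool) (w : List α) (k : ℕ) (hk : 1 ≤ k) :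
    ((((rskTab parity w).map List.length).take k).sum =
      sSup {m : ℕ | ∃ A : Fin k → Finset (Fin w.length),
        (∀ s t, s ≠ t → Disjoint (A s) (A t)) ∧
        (∀ t, ∀ i ∈ A t, ∀ j ∈ A t, i < j →
          (w.get i < w.get j ∨ (w.get i = w.get j ∧ parity (w.get i) = true))) ∧
        ∑ t, (A t).card = m}) ∧
    ((∑ j ∈ Finset.range k, (rskTab parity w).countP (fun r => decide (j < r.length))) =
      sSup {m : ℕ | ∃ A : Fin k → Finset (Fin w.length),
        (∀ s t, s ≠ t → Disjoint (A s) (A t)) ∧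
        (∀ t, ∀ i ∈ A t, ∀ j ∈ A t, i < j →
          (w.get j < w.get i ∨ (w.get i = w.get j ∧ parity (w.get i) = false))) ∧
        ∑ t, (A t).card = m}) := by
  obtain ⟨hT, hw⟩ := isTableau_rskTab_and_chainEquiv parity w
  have hID := complTrans_incRel_decRel parity
  constructor
  · rw [← (hT.isGreatest_rows hID k).csSup_eq]
    congr 1
    ext m
    exact (by simpa using (hw [] [] k m).1.symm : _ ↔ HasChains (IncRel parity) w k m).trans
      hasChains_iff
  · rw [← (hT.isGreatest_cols hID k).csSup_eq]
    congr 1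
    ext m
    exact (by simpa using (hw [] [] k m).2.symm : _ ↔ HasChains (DecRel parity) w k m).trans
      hasChains_iff
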